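/- arXiv:1101.1800 — 3 statements merged into one kernel-verified Lean document; each statement's English description precedes it below -/
import Mathlib

section
/- For every Dedekind cut (A,B), one has sup ι(A) ∼ inf ι(B), i.e. the least upper bound in (𝓡,⪯) of the set {ι(a) : a ∈ A} is equivalent to the greatest lower bound of the set {ι(b) : b ∈ B}. -/
/-- The ambient space `𝓡` of decimal representations: an integer part together
with a sequence of digits in `{0,…,9}`. -/
abbrev DecimalRep := ℤ × (ℕ → Fin 10)

namespace DecimalRep

open scoped Classical

/-- The truncation `[x]_k = x₀ + ∑_{i=1}^k x_i / 10^i` of `x` up to the `k`-th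
digit, as a rational number. -/
def trunc (x : DecimalRep) (k : ℕ) : ℚ :=
  (x.1 : ℚ) + ∑ i ∈ Finset.range k, ((x.2 i : ℕ) : ℚ) / 10 ^ (i + 1)

/-- The order `⪯` on `𝓡`: `x ⪯ y` iff every truncation of `x` is at most the
corresponding truncation of `y`. -/
def le (x y : DecimalRep) : Prop := ∀ k : ℕ, trunc x k ≤ trunc y k

/-- The strict order `≺` on `𝓡`. -/
def lt (x y : DecimalRep) : Prop := le x y ∧ x ≠ y

/-- Two decimal representations are equivalent ("have no gap") iff there is no
third element lying between them. -/
def equiv (x y : DecimalRep) : Prop :=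
  ¬ ∃ z : DecimalRep, z ≠ x ∧ z ≠ y ∧
      ((le x z ∧ le z y) ∨ (le y z ∧ le z x))

/-- `𝓡₉`: decimal representations ending in an infinite string of nines. -/
def allNines (x : DecimalRep) : Prop := ∃ N : ℕ, ∀ k ≥ N, x.2 k = 9

/-- `ℚ_F`: decimal representations ending in an infinite string of zeros. -/
def finiteDec (x : DecimalRep) : Prop := ∃ N : ℕ, ∀ k ≥ N, x.2 k = 0

/-- The decimal expansion map `ι : ℚ → 𝓡`, satisfying
`[ι(α)]_k = ⌊10^k·α⌋/10^k` for all `k`. -/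
def iota (α : ℚ) : DecimalRep :=
  (⌊α⌋, fun k => ⟨(⌊α * 10 ^ (k + 1)⌋ % 10).toNat, by
    have h1 : (0 : ℤ) ≤ ⌊α * 10 ^ (k + 1)⌋ % 10 := Int.emod_nonneg _ (by norm_num)
    have h2 : ⌊α * 10 ^ (k + 1)⌋ % 10 < 10 := Int.emod_lt_of_pos _ (by norm_num)
    omega⟩)

/-- `M` is a least upper bound of `W` in `(𝓡,⪯)`. -/
def IsLub (W : Set DecimalRep) (M : DecimalRep) : Prop :=
  (∀ w ∈ W, le w M) ∧ ∀ M' : DecimalRep, (∀ w ∈ W, le w M') → le M M'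

/-- `M` is a greatest lower bound of `W` in `(𝓡,⪯)`. -/
def IsGlb (W : Set DecimalRep) (M : DecimalRep) : Prop :=
  (∀ w ∈ W, le M w) ∧ ∀ M' : DecimalRep, (∀ w ∈ W, le M' w) → le M' M

/-- The least upper bound of a set in `(𝓡,⪯)` (junk value if none exists). -/
noncomputable def sup (W : Set DecimalRep) : DecimalRep :=
  if h : ∃ M, IsLub W M then h.choose else default

/-- The greatest lower bound of a set in `(𝓡,⪯)` (junk value if none exists). -/
noncomputable def inf (W : Set DecimalRep) : DecimalRep :=
  if h : ∃ M, IsGlb W M then h.choose else default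

/-- Addition `x ⊕ y := sup {ι([x]_k + [y]_k) : k ∈ ℕ}` on `𝓡`. -/
noncomputable def add (x y : DecimalRep) : DecimalRep :=
  sup { z | ∃ k : ℕ, z = iota (trunc x k + trunc y k) }

/-- The "additive inverse" map `Ψ(x₀.x₁x₂⋯) = (−1−x₀).(9−x₁)(9−x₂)⋯`. -/
def psi (x : DecimalRep) : DecimalRep :=
  (-1 - x.1, fun k => ⟨9 - (x.2 k).val, by have := (x.2 k).isLt; omega⟩)

/-- The signal map: `0` on the nonnegative part, `1` on the negative part. -/
noncomputable def sign (x : DecimalRep) : ℕ :=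
  if le (iota 0) x then 0 else 1

/-- The absolute value `‖x‖ := max {x, Ψ(x)}` with respect to `⪯`. -/
noncomputable def norm (x : DecimalRep) : DecimalRep :=
  if le x (psi x) then psi x else x

/-- Multiplication
`x ⊗ y := Ψ^(sign x + sign y) (sup {ι([‖x‖]_k · [‖y‖]_k) : k ∈ ℕ})` on `𝓡`. -/
noncomputable def mul (x y : DecimalRep) : DecimalRep :=
  psi^[sign x + sign y]
    (sup { z | ∃ k : ℕ, z = iota (trunc (norm x) k * trunc (norm y) k) })

/-- The multiplicative inverse
`x⁻¹ := Ψ^(sign x) (inf {ι(1/[‖x‖]_k) : k ∈ ℕ, [‖x‖]_k > 0})`. -/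
noncomputable def inv (x : DecimalRep) : DecimalRep :=
  psi^[sign x]
    (inf { z | ∃ k : ℕ, 0 < trunc (norm x) k ∧ z = iota (1 / trunc (norm x) k) })

/-- A sequence of rationals is Cauchy. -/
def IsCauchy (x : ℕ → ℚ) : Prop :=
  ∀ ε : ℚ, 0 < ε → ∃ N : ℕ, ∀ m n : ℕ, N ≤ m → N ≤ n → |x m - x n| < ε

/-- The upper limit `inf { sup {f k : k ≥ n} : n ∈ ℕ }` of a sequence in `𝓡`. -/
noncomputable def upperLimit (f : ℕ → DecimalRep) : DecimalRep :=
  inf { z | ∃ n : ℕ, z = sup { w | ∃ k : ℕ, n ≤ k ∧ w = f k } }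

/-- The lower limit `sup { inf {f k : k ≥ n} : n ∈ ℕ }` of a sequence in `𝓡`. -/
noncomputable def lowerLimit (f : ℕ → DecimalRep) : DecimalRep :=
  sup { z | ∃ n : ℕ, z = inf { w | ∃ k : ℕ, n ≤ k ∧ w = f k } }

end DecimalRep

namespace DecimalRep

def T (x : DecimalRep) : ℕ → ℤ
  | 0 => x.1
  | k + 1 => 10 * T x k + ((x.2 k : ℕ) : ℤ)

theorem T_succ (x : DecimalRep) (k : ℕ) : T x (k+1) = 10 * T x k + ((x.2 k : ℕ) : ℤ) := rfl

theorem T_lo (x : DecimalRep) (k : ℕ) : 10 * T x k ≤ T x (k+1) := by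
  rw [T_succ]; omega

theorem T_hi (x : DecimalRep) (k : ℕ) : T x (k+1) ≤ 10 * T x k + 9 := by
  rw [T_succ]; have := (x.2 k).isLt; omega

theorem trunc_eq (x : DecimalRep) (k : ℕ) : trunc x k = (T x k : ℚ) / 10 ^ k := by
  induction k with
  | zero => simp [trunc, T]
  | succ k ih =>
    have : trunc x (k+1) = trunc x k + ((x.2 k : ℕ) : ℚ) / 10 ^ (k + 1) := by
      simp only [trunc, Finset.sum_range_succ]; ring
    rw [this, ih, T_succ]
    push_cast
    field_simp
    ring

theorem le_iff (x y : DecimalRep) : le x y ↔ ∀ k, T x k ≤ T y k := by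
  unfold le
  refine forall_congr' fun k => ?_
  rw [trunc_eq, trunc_eq, div_le_div_iff_of_pos_right (by positivity)]
  exact Int.cast_le

theorem T_inj {x y : DecimalRep} (h : ∀ k, T x k = T y k) : x = y := by
  refine Prod.ext (h 0) ?_
  funext k
  have h1 := h (k+1)
  rw [T_succ, T_succ, h k] at h1
  apply Fin.ext
  omega

theorem T_iota (α : ℚ) (k : ℕ) : T (iota α) k = ⌊α * 10 ^ k⌋ := by
  induction k with
  | zero => simp [T, iota]
  | succ k ih =>
    have hd : (((iota α).2 k : ℕ) : ℤ) = ⌊α * 10 ^ (k + 1)⌋ % 10 := by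
      simp only [iota]
      exact Int.toNat_of_nonneg (Int.emod_nonneg _ (by norm_num))
    have h2 : ⌊α * 10 ^ k⌋ = ⌊α * 10 ^ (k + 1)⌋ / 10 := by
      have h := Int.floor_div_natCast (α * 10 ^ (k+1)) 10
      have e : α * 10 ^ (k+1) / ((10 : ℕ) : ℚ) = α * 10 ^ k := by
        push_cast; field_simp; ring
      rw [e] at h
      exact_mod_cast h
    rw [T_succ, ih, hd, h2]
    omega

theorem exists_T (t : ℕ → ℤ) (h1 : ∀ k, 10 * t k ≤ t (k+1)) (h2 : ∀ k, t (k+1) ≤ 10 * t k + 9) :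
    ∃ x : DecimalRep, ∀ k, T x k = t k := by
  refine ⟨(t 0, fun k => ⟨(t (k+1) - 10 * t k).toNat, by have := h2 k; omega⟩), fun k => ?_⟩
  induction k with
  | zero => rfl
  | succ k ih =>
    rw [T_succ, ih]
    have := h1 k
    simp only
    omega

theorem antisymm {x y : DecimalRep} (h : le x y) (h' : le y x) : x = y :=
  T_inj fun k => le_antisymm ((le_iff _ _).1 h k) ((le_iff _ _).1 h' k)

theorem sup_spec (W : Set DecimalRep) (hW : W.Nonempty) (u : DecimalRep)
    (hu : ∀ w ∈ W, le w u) :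
    (∀ w ∈ W, ∀ k, T w k ≤ T (sup W) k) ∧ ∀ k, ∃ w ∈ W, T w k = T (sup W) k := by
  have key : ∀ k, ∃ m : ℤ, (∃ w ∈ W, T w k = m) ∧ ∀ w ∈ W, T w k ≤ m := by
    intro k
    obtain ⟨m, hm, hm'⟩ := Int.exists_greatest_of_bdd (P := fun m => ∃ w ∈ W, T w k = m)
      ⟨T u k, by rintro z ⟨w, hw, rfl⟩; exact (le_iff _ _).1 (hu w hw) k⟩
      ⟨_, hW.choose, hW.choose_spec, rfl⟩
    exact ⟨m, hm, fun w hw => hm' _ ⟨w, hw, rfl⟩⟩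
  choose t ht ht' using key
  obtain ⟨x, hx⟩ := exists_T t
    (fun k => by
      obtain ⟨w, hw, e⟩ := ht k
      have := ht' (k+1) w hw
      have := T_lo w k
      omega)
    (fun k => by
      obtain ⟨w, hw, e⟩ := ht (k+1)
      have := ht' k w hw
      have := T_hi w k
      omega)
  have hl : IsLub W x := by
    refine ⟨fun w hw => (le_iff _ _).2 fun k => by rw [hx]; exact ht' k w hw, fun M hM => ?_⟩
    refine (le_iff _ _).2 fun k => ?_
    obtain ⟨w, hw, e⟩ := ht k
    rw [hx, ← e]
    exact (le_iff _ _).1 (hM w hw) k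
  have he : ∃ M, IsLub W M := ⟨x, hl⟩
  have hs : IsLub W (sup W) := by
    unfold sup; rw [dif_pos he]; exact he.choose_spec
  have : sup W = x := antisymm (hs.2 _ hl.1) (hl.2 _ hs.1)
  rw [this]
  exact ⟨fun w hw k => by rw [hx]; exact ht' k w hw, fun k => by rw [hx]; exact ht k⟩

theorem inf_spec (W : Set DecimalRep) (hW : W.Nonempty) (u : DecimalRep)
    (hu : ∀ w ∈ W, le u w) :
    (∀ w ∈ W, ∀ k, T (inf W) k ≤ T w k) ∧ ∀ k, ∃ w ∈ W, T w k = T (inf W) k := by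
  have key : ∀ k, ∃ m : ℤ, (∃ w ∈ W, T w k = m) ∧ ∀ w ∈ W, m ≤ T w k := by
    intro k
    obtain ⟨m, hm, hm'⟩ := Int.exists_least_of_bdd (P := fun m => ∃ w ∈ W, T w k = m)
      ⟨T u k, by rintro z ⟨w, hw, rfl⟩; exact (le_iff _ _).1 (hu w hw) k⟩
      ⟨_, hW.choose, hW.choose_spec, rfl⟩
    exact ⟨m, hm, fun w hw => hm' _ ⟨w, hw, rfl⟩⟩
  choose t ht ht' using key
  obtain ⟨x, hx⟩ := exists_T t
    (fun k => by
      obtain ⟨w, hw, e⟩ := ht (k+1)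
      have := ht' k w hw
      have := T_lo w k
      omega)
    (fun k => by
      obtain ⟨w, hw, e⟩ := ht k
      have := ht' (k+1) w hw
      have := T_hi w k
      omega)
  have hl : IsGlb W x := by
    refine ⟨fun w hw => (le_iff _ _).2 fun k => by rw [hx]; exact ht' k w hw, fun M hM => ?_⟩
    refine (le_iff _ _).2 fun k => ?_
    obtain ⟨w, hw, e⟩ := ht k
    rw [hx, ← e]
    exact (le_iff _ _).1 (hM w hw) k
  have he : ∃ M, IsGlb W M := ⟨x, hl⟩
  have hs : IsGlb W (inf W) := by
    unfold inf; rw [dif_pos he]; exact he.choose_spec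
  have : inf W = x := antisymm (hl.2 _ hs.1) (hs.2 _ hl.1)
  rw [this]
  exact ⟨fun w hw k => by rw [hx]; exact ht' k w hw, fun k => by rw [hx]; exact ht k⟩

theorem iota_mono {a b : ℚ} (h : a ≤ b) : le (iota a) (iota b) := by
  refine (le_iff _ _).2 fun k => ?_
  rw [T_iota, T_iota]
  exact Int.floor_mono (by gcongr)

end DecimalRep

open DecimalRep in
/-- For every Dedekind cut `(A|B)`, `sup ι(A) ∼ inf ι(B)` in `(𝓡,⪯)`. -/
theorem sup_equiv_inf_of_dedekind_cut (A B : Set ℚ)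
    (hA : A.Nonempty) (hB : B.Nonempty)
    (hdisj : A ∩ B = ∅) (hunion : A ∪ B = Set.univ)
    (hlt : ∀ a ∈ A, ∀ b ∈ B, a < b)
    (hnomax : ∀ a ∈ A, ∃ a' ∈ A, a < a') :
    equiv (sup (iota '' A)) (inf (iota '' B)) := by
  obtain ⟨a0, ha0⟩ := hA
  obtain ⟨b0, hb0⟩ := hB
  obtain ⟨s1, s2⟩ := sup_spec (iota '' A) ⟨_, a0, ha0, rfl⟩ (iota b0)
    (by rintro _ ⟨a, ha, rfl⟩; exact iota_mono (hlt a ha b0 hb0).le)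
  obtain ⟨i1, i2⟩ := inf_spec (iota '' B) ⟨_, b0, hb0, rfl⟩ (iota a0)
    (by rintro _ ⟨b, hb, rfl⟩; exact iota_mono (hlt a0 ha0 b hb).le)
  generalize sup (iota '' A) = S at *
  generalize inf (iota '' B) = I at *
  have hSI : ∀ k, T S k ≤ T I k := by
    intro k
    obtain ⟨_, ⟨a, ha, rfl⟩, ea⟩ := s2 k
    obtain ⟨_, ⟨b, hb, rfl⟩, eb⟩ := i2 k
    rw [← ea, ← eb]
    exact (le_iff _ _).1 (iota_mono (hlt a ha b hb).le) k
  have hIS : ∀ k, T I k ≤ T S k + 1 := by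
    intro k
    have hq : T (iota (((T S k + 1 : ℤ) : ℚ) / 10 ^ k)) k = T S k + 1 := by
      rw [T_iota, div_mul_cancel₀ _ (by positivity), Int.floor_intCast]
    have hm : ((T S k + 1 : ℤ) : ℚ) / 10 ^ k ∈ A ∪ B := by rw [hunion]; trivial
    rcases hm with hm | hm
    · have := s1 _ ⟨_, hm, rfl⟩ k
      omega
    · have := i1 _ ⟨_, hm, rfl⟩ k
      omega
  rintro ⟨z, hzS, hzI, ⟨h1, h2⟩ | ⟨h1, h2⟩⟩ <;> rw [le_iff] at h1 h2
  · apply hzS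
    by_contra _
    have : ∃ m, T z m ≠ T S m := by
      by_contra! hc
      exact hzS (T_inj hc)
    obtain ⟨m, hm⟩ := this
    have : ∃ n, T z n ≠ T I n := by
      by_contra! hc
      exact hzI (T_inj hc)
    obtain ⟨n, hn⟩ := this
    have up : ∀ j, T S (m + j) < T z (m + j) := by
      intro j
      induction j with
      | zero => have := h1 m; simp only [add_zero]; omega
      | succ j ih =>
        have := T_lo z (m+j)
        have := T_hi S (m+j)
        rw [← add_assoc]; omega
    have up' : ∀ j, T z (n + j) < T I (n + j) := by
      intro j
      induction j with
      | zero => have := h2 n; simp only [add_zero]; omega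
      | succ j ih =>
        have := T_lo I (n+j)
        have := T_hi z (n+j)
        rw [← add_assoc]; omega
    have a1 := up n
    have a2 := up' m
    rw [add_comm n m] at a2
    have := hIS (m+n)
    omega
  · apply hzS
    refine T_inj fun k => ?_
    have := h1 k
    have := h2 k
    have := hSI k
    omega
end

section
/- No rational number has a decimal expansion ending in an infinite string of nines: the range of ι is disjoint from 𝓡₉, i.e. for every α ∈ ℚ, ι(α) ∉ 𝓡₉. -/
open DecimalRep in
/-- No rational number has a decimal expansion ending in an infinite string of
nines. -/
theorem iota_not_allNines (α : ℚ) : ¬ allNines (iota α) := by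
  rintro ⟨N, hN⟩
  have step : ∀ k ≥ N, 1 - Int.fract (α * 10 ^ (k + 1)) = 10 * (1 - Int.fract (α * 10 ^ k)) := by
    intro k hk
    have h := congrArg Fin.val (hN k hk)
    have h9 : (⌊α * 10 ^ (k + 1)⌋ % 10).toNat = 9 := h
    have e : α * 10 ^ (k + 1) = 10 * (α * 10 ^ k) := by ring
    rw [e] at h9 ⊢
    generalize α * 10 ^ k = β at h9 ⊢
    have a1 := Int.floor_le β
    have a2 := Int.lt_floor_add_one β
    have b1 := Int.floor_le (10 * β)
    have b2 := Int.lt_floor_add_one (10 * β)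
    have c1 : 10 * ⌊β⌋ < ⌊10 * β⌋ + 1 := by
      have : (10 : ℚ) * ⌊β⌋ < ⌊10 * β⌋ + 1 := by linarith
      exact_mod_cast this
    have c2 : ⌊10 * β⌋ < 10 * ⌊β⌋ + 10 := by
      have : (⌊10 * β⌋ : ℚ) < 10 * ⌊β⌋ + 10 := by linarith
      exact_mod_cast this
    have c3 : ⌊10 * β⌋ = 10 * ⌊β⌋ + 9 := by omega
    have c4 : (⌊10 * β⌋ : ℚ) = 10 * ⌊β⌋ + 9 := by exact_mod_cast c3
    unfold Int.fract
    rw [c4]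
    ring
  have key : ∀ j : ℕ, 1 - Int.fract (α * 10 ^ (N + j)) = 10 ^ j * (1 - Int.fract (α * 10 ^ N)) := by
    intro j
    induction j with
    | zero => simp
    | succ j ih =>
      rw [← add_assoc, step (N + j) (by omega), ih]
      ring
  have hpos : 0 < 1 - Int.fract (α * 10 ^ N) := sub_pos.2 (Int.fract_lt_one _)
  obtain ⟨j, hj⟩ := pow_unbounded_of_one_lt (1 / (1 - Int.fract (α * 10 ^ N))) (by norm_num : (1 : ℚ) < 10)
  rw [div_lt_iff₀ hpos, ← key j] at hj
  have := Int.fract_nonneg (α * 10 ^ (N + j))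
  linarith
end

section
/- An element x = x₀.x₁x₂x₃⋯ ∈ 𝓡 lies in the range of ι or in 𝓡₉ if and only if its digit sequence ends with infinite recurrence of a block of digits, i.e. there exist N ∈ ℕ and s ∈ ℕ with s ≥ 1 such that x_{i+s} = x_i for all i ≥ N. (Equivalently: x is irrational — neither a decimal expansion of a rational nor eventually all nines — iff its digit sequence is not eventually periodic.) -/
namespace DecimalRep

/-- The integer `10^k [x]_k`. -/
def intTrunc (x : DecimalRep) : ℕ → ℤ
  | 0 => x.1
  | k + 1 => 10 * intTrunc x k + ((x.2 k : ℕ) : ℤ)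

lemma intTrunc_lower (x : DecimalRep) (k j : ℕ) :
    10 ^ j * intTrunc x k ≤ intTrunc x (k + j) := by
  induction j with
  | zero => simp
  | succ j ih =>
    have : intTrunc x (k + (j + 1)) = 10 * intTrunc x (k + j) + ((x.2 (k + j) : ℕ) : ℤ) := rfl
    rw [this, pow_succ]
    have h0 : (0 : ℤ) ≤ ((x.2 (k + j) : ℕ) : ℤ) := by positivity
    linarith

lemma intTrunc_upper (x : DecimalRep) (k j : ℕ) :
    intTrunc x (k + j) + 1 ≤ 10 ^ j * (intTrunc x k + 1) := by
  induction j with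
  | zero => simp
  | succ j ih =>
    have : intTrunc x (k + (j + 1)) = 10 * intTrunc x (k + j) + ((x.2 (k + j) : ℕ) : ℤ) := rfl
    rw [this, pow_succ]
    have h0 : ((x.2 (k + j) : ℕ) : ℤ) ≤ 9 := by
      have := (x.2 (k + j)).isLt
      omega
    linarith

lemma iota_eq_of_floor (x : DecimalRep) (α : ℚ)
    (h : ∀ k, ⌊α * 10 ^ k⌋ = intTrunc x k) : iota α = x := by
  refine Prod.ext ?_ ?_
  · have := h 0
    simpa [intTrunc, iota] using this
  · funext k
    apply Fin.ext
    have h1 := h (k + 1)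
    have h2 : intTrunc x (k + 1) = 10 * intTrunc x k + ((x.2 k : ℕ) : ℤ) := rfl
    have h3 := (x.2 k).isLt
    change (⌊α * 10 ^ (k + 1)⌋ % 10).toNat = (x.2 k : ℕ)
    rw [h1, h2]
    omega

lemma periodic_of_rat (α : ℚ) :
    ∃ N s : ℕ, 1 ≤ s ∧ ∀ i : ℕ, N ≤ i → (iota α).2 (i + s) = (iota α).2 i := by
  have hq : (0 : ℤ) < (α.den : ℤ) := by exact_mod_cast α.den_pos
  have hnz : NeZero α.den := ⟨α.den_pos.ne'⟩
  obtain ⟨a, b, hab, hE⟩ : ∃ a b : ℕ, a < b ∧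
      ((α.num * 10 ^ a : ℤ) : ZMod α.den) = ((α.num * 10 ^ b : ℤ) : ZMod α.den) := by
    obtain ⟨a, b, hne, he⟩ := Finite.exists_ne_map_eq_of_infinite
      (fun k : ℕ => ((α.num * 10 ^ k : ℤ) : ZMod α.den))
    rcases lt_or_gt_of_ne hne with h | h
    · exact ⟨a, b, h, he⟩
    · exact ⟨b, a, h, he.symm⟩
  rw [ZMod.intCast_eq_intCast_iff_dvd_sub] at hE
  obtain ⟨m, hm⟩ := hE
  have hα : α * α.den = α.num := Rat.mul_den_eq_num α
  have hden : (α.den : ℚ) ≠ 0 := by exact_mod_cast α.den_pos.ne'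
  have key : α * 10 ^ b = α * 10 ^ a + m := by
    have hm' : (α.num : ℚ) * 10 ^ b - α.num * 10 ^ a = α.den * m := by exact_mod_cast hm
    rw [← hα] at hm'
    apply mul_left_cancel₀ hden
    linarith
  refine ⟨a, b - a, by omega, fun i hi => ?_⟩
  apply Fin.ext
  change (⌊α * 10 ^ (i + (b - a) + 1)⌋ % 10).toNat = (⌊α * 10 ^ (i + 1)⌋ % 10).toNat
  obtain ⟨t, rfl⟩ := Nat.exists_eq_add_of_le hi
  have e : α * 10 ^ (a + t + (b - a) + 1) = α * 10 ^ (a + t + 1) + ((10 * (m * 10 ^ t) : ℤ) : ℚ) := by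
    have : a + t + (b - a) + 1 = b + (t + 1) := by omega
    rw [this, pow_add, ← mul_assoc, key]
    push_cast
    ring
  rw [e, Int.floor_add_intCast]
  omega

lemma rat_of_periodic (x : DecimalRep) (N s : ℕ) (hs : 1 ≤ s)
    (hp : ∀ i : ℕ, N ≤ i → x.2 (i + s) = x.2 i) (hn : ¬ allNines x) :
    ∃ α : ℚ, iota α = x := by
  have hpos : (0 : ℚ) < 10 ^ s - 1 := by
    have : (1 : ℚ) < 10 ^ s := one_lt_pow₀ (by norm_num) (by omega)
    linarith
  have hB : ∀ j, intTrunc x (N + j + s) - intTrunc x (N + j)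
      = 10 ^ j * (intTrunc x (N + s) - intTrunc x N) := by
    intro j
    induction j with
    | zero => simp
    | succ j ih =>
      have h1 : intTrunc x (N + (j + 1)) = 10 * intTrunc x (N + j) + ((x.2 (N + j) : ℕ) : ℤ) := rfl
      have h2 : intTrunc x (N + (j + 1) + s)
          = 10 * intTrunc x (N + j + s) + ((x.2 (N + j + s) : ℕ) : ℤ) := by
        have : N + (j + 1) + s = (N + j + s) + 1 := by omega
        rw [this]; rfl
      rw [h1, h2, hp (N + j) (by omega), pow_succ]
      linarith
  set α : ℚ := ((intTrunc x (N + s) - intTrunc x N : ℤ) : ℚ) / ((10 ^ s - 1) * 10 ^ N) with hα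
  have hα' : ∀ j, (10 ^ s - 1) * (α * 10 ^ (N + j))
      = (intTrunc x (N + j + s) : ℚ) - intTrunc x (N + j) := by
    intro j
    have h : (intTrunc x (N + j + s) : ℚ) - intTrunc x (N + j)
      = 10 ^ j * ((intTrunc x (N + s) - intTrunc x N : ℤ) : ℚ) := by exact_mod_cast hB j
    rw [h, hα, pow_add]
    field_simp
  have lowN : ∀ j, (intTrunc x (N + j) : ℚ) ≤ α * 10 ^ (N + j) := by
    intro j
    have h : (10 : ℚ) ^ s * intTrunc x (N + j) ≤ intTrunc x (N + j + s) := by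
      exact_mod_cast intTrunc_lower x (N + j) s
    refine le_of_mul_le_mul_left ?_ hpos
    rw [hα']
    linarith
  have upN : ∀ j, α * 10 ^ (N + j) ≤ (intTrunc x (N + j) : ℚ) + 1 := by
    intro j
    have h : (intTrunc x (N + j + s) : ℚ) + 1 ≤ (10 : ℚ) ^ s * (intTrunc x (N + j) + 1) := by
      exact_mod_cast intTrunc_upper x (N + j) s
    refine le_of_mul_le_mul_left ?_ hpos
    rw [hα']
    linarith
  have hN : (0 : ℚ) < 10 ^ N := by positivity
  have low : ∀ k, (intTrunc x k : ℚ) ≤ α * 10 ^ k := by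
    intro k
    have h : (10 : ℚ) ^ N * intTrunc x k ≤ intTrunc x (k + N) := by
      exact_mod_cast intTrunc_lower x k N
    have h2 := lowN k
    rw [add_comm k N] at h
    refine le_of_mul_le_mul_left ?_ hN
    rw [pow_add] at h2
    linarith
  have up : ∀ k, α * 10 ^ k ≤ (intTrunc x k : ℚ) + 1 := by
    intro k
    have h : (intTrunc x (k + N) : ℚ) + 1 ≤ (10 : ℚ) ^ N * (intTrunc x k + 1) := by
      exact_mod_cast intTrunc_upper x k N
    have h2 := upN k
    rw [add_comm k N] at h
    refine le_of_mul_le_mul_left ?_ hN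
    rw [pow_add] at h2
    linarith
  have step : ∀ k, α * 10 ^ k = (intTrunc x k : ℚ) + 1 →
      x.2 k = 9 ∧ α * 10 ^ (k + 1) = (intTrunc x (k + 1) : ℚ) + 1 := by
    intro k hk
    have h1 := up (k + 1)
    have h2 : (intTrunc x (k + 1) : ℚ) = 10 * intTrunc x k + ((x.2 k : ℕ) : ℚ) := by
      have : intTrunc x (k + 1) = 10 * intTrunc x k + ((x.2 k : ℕ) : ℤ) := rfl
      rw [this]; push_cast; rfl
    have h3 : α * 10 ^ (k + 1) = 10 * intTrunc x k + 10 := by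
      rw [pow_succ, ← mul_assoc, hk]; ring
    have h4 : (9 : ℚ) ≤ ((x.2 k : ℕ) : ℚ) := by linarith
    have h5 : 9 ≤ (x.2 k : ℕ) := by exact_mod_cast h4
    have h6 : (x.2 k : ℕ) = 9 := by
      have := (x.2 k).isLt
      omega
    refine ⟨Fin.ext h6, ?_⟩
    rw [h3, h2, h6]; push_cast; ring
  refine ⟨α, iota_eq_of_floor x α fun k => ?_⟩
  rw [Int.floor_eq_iff]
  refine ⟨low k, lt_of_le_of_ne (up k) fun he => hn ⟨k, ?_⟩⟩
  have all : ∀ j, α * 10 ^ (k + j) = (intTrunc x (k + j) : ℚ) + 1 := by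
    intro j
    induction j with
    | zero => exact he
    | succ j ih => exact (step _ ih).2
  intro i hi
  obtain ⟨t, rfl⟩ := Nat.exists_eq_add_of_le hi
  exact (step _ (all t)).1

end DecimalRep

open DecimalRep in
/-- An element of `𝓡` is a decimal expansion of a rational or ends in all
nines iff its digit sequence is eventually periodic. -/
theorem rational_or_allNines_iff_eventually_periodic (x : DecimalRep) :
    ((∃ α : ℚ, iota α = x) ∨ allNines x) ↔
      ∃ N s : ℕ, 1 ≤ s ∧ ∀ i : ℕ, N ≤ i → x.2 (i + s) = x.2 i := by
  constructor
  · rintro (⟨α, rfl⟩ | ⟨N, hN⟩)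
    · exact periodic_of_rat α
    · exact ⟨N, 1, le_refl 1, fun i hi => by rw [hN i hi, hN (i + 1) (by omega)]⟩
  · rintro ⟨N, s, hs, hp⟩
    by_cases hn : allNines x
    · exact Or.inr hn
    · exact Or.inl (rat_of_periodic x N s hs hp hn)
end
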